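/- Let n be a positive natural number, U a real n × n matrix, and b : Fin n → ℝ. Define Φ : (Fin n → ℝ) → (Fin n → ℝ) by Φ(u)(i) = σ((U · u + b)(i)) · tanh(u(i)), where σ(x) = 1/(1 + exp(−x)). Then for every initial state u₀ : Fin n → ℝ, the iterates u_t = Φ^[t](u₀) converge to the zero vector: lim_{t → ∞} u_t = 0. In other words, the zero state is a global attractor of the dynamical system induced by the CFN. -/

import Mathlib

/-!
Both factors of `Φ` shrink the state: `|tanh x| ≤ |x|`, and the forget gate is a continuous map with
entries in `(0, 1)`. On the compact ball of radius `‖u₀‖` the gate attains its largest norm `q < 1`,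
so `‖Φ u‖ ≤ q * ‖u‖` there. The orbit therefore never leaves the ball and decays geometrically.
-/

open Filter Metric Set
open scoped Topology

lemma norm_iterate_le_pow_mul_norm {E : Type*} [SeminormedAddGroup E] {f : E → E} {q : ℝ}
    {x₀ : E} (hq₀ : 0 ≤ q) (hq₁ : q ≤ 1) (hf : ∀ x, ‖x‖ ≤ ‖x₀‖ → ‖f x‖ ≤ q * ‖x‖) (t : ℕ) :
    ‖f^[t] x₀‖ ≤ q ^ t * ‖x₀‖ := by
  induction t with
  | zero => simp
  | succ t ih =>
    have mem_ball : ‖f^[t] x₀‖ ≤ ‖x₀‖ :=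
      ih.trans (mul_le_of_le_one_left (norm_nonneg x₀) (pow_le_one₀ hq₀ hq₁))
    calc ‖f^[t + 1] x₀‖ = ‖f (f^[t] x₀)‖ := by rw [Function.iterate_succ_apply']
      _ ≤ q * ‖f^[t] x₀‖ := hf _ mem_ball
      _ ≤ q * (q ^ t * ‖x₀‖) := by gcongr
      _ = q ^ (t + 1) * ‖x₀‖ := by ring

lemma tendsto_iterate_zero_of_norm_le_mul {E : Type*} [SeminormedAddGroup E] {f : E → E} {q : ℝ}
    {x₀ : E} (hq₀ : 0 ≤ q) (hq₁ : q < 1) (hf : ∀ x, ‖x‖ ≤ ‖x₀‖ → ‖f x‖ ≤ q * ‖x‖) :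
    Tendsto (fun t => f^[t] x₀) atTop (𝓝 0) := by
  refine squeeze_zero_norm (norm_iterate_le_pow_mul_norm hq₀ hq₁.le hf) ?_
  simpa only [zero_mul] using (tendsto_pow_atTop_nhds_zero_of_lt_one hq₀ hq₁).mul_const ‖x₀‖

lemma tendsto_iterate_mul_zero {A : Type*} [NonUnitalSeminormedRing A] [ProperSpace A]
    {g ψ : A → A} (hg : Continuous g) (hg_lt : ∀ x, ‖g x‖ < 1) (hψ : ∀ x, ‖ψ x‖ ≤ ‖x‖) (x₀ : A) :
    Tendsto (fun t => (fun x => g x * ψ x)^[t] x₀) atTop (𝓝 0) := by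
  obtain ⟨y, -, hy⟩ :
      ∃ y ∈ closedBall (0 : A) ‖x₀‖, IsMaxOn (fun x => ‖g x‖) (closedBall 0 ‖x₀‖) y :=
    (isCompact_closedBall 0 ‖x₀‖).exists_isMaxOn
      (nonempty_closedBall.mpr (norm_nonneg x₀)) hg.norm.continuousOn
  refine tendsto_iterate_zero_of_norm_le_mul (norm_nonneg (g y)) (hg_lt y) fun x hx => ?_
  calc ‖g x * ψ x‖ ≤ ‖g x‖ * ‖ψ x‖ := norm_mul_le _ _
    _ ≤ ‖g y‖ * ‖x‖ := by
      gcongr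
      · exact hy (mem_closedBall_zero_iff.mpr hx)
      · exact hψ x

lemma sinh_le_mul_cosh {x : ℝ} (hx : 0 ≤ x) : Real.sinh x ≤ x * Real.cosh x := by
  have hderiv (y : ℝ) :
      HasDerivAt (fun z => z * Real.cosh z - Real.sinh z) (y * Real.sinh y) y := by
    simpa using
      ((hasDerivAt_id' y).fun_mul (Real.hasDerivAt_cosh y)).fun_sub (Real.hasDerivAt_sinh y)
  have hmono : MonotoneOn (fun z => z * Real.cosh z - Real.sinh z) (Ici 0) := by
    refine monotoneOn_of_hasDerivWithinAt_nonneg (convex_Ici 0)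
      (fun y _ => (hderiv y).continuousAt.continuousWithinAt)
      (fun y _ => (hderiv y).hasDerivWithinAt) fun y hy => ?_
    have hy₀ : 0 ≤ y := interior_subset hy
    exact mul_nonneg hy₀ (Real.sinh_nonneg_iff.mpr hy₀)
  simpa using hmono self_mem_Ici hx hx

lemma abs_tanh_le_abs (x : ℝ) : |Real.tanh x| ≤ |x| := by
  rw [Real.tanh_eq_sinh_div_cosh, abs_div, abs_of_pos (Real.cosh_pos x),
    div_le_iff₀ (Real.cosh_pos x), Real.abs_sinh, ← Real.cosh_abs x]
  exact sinh_le_mul_cosh (abs_nonneg x)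

lemma abs_sigmoid_lt_one (x : ℝ) : |Real.sigmoid x| < 1 := by
  simpa only [abs_of_pos (Real.sigmoid_pos x)] using Real.sigmoid_lt_one x

theorem cfn_zero_global_attractor_general {ι : Type*} [Finite ι] {g : (ι → ℝ) → ι → ℝ}
    (hg : Continuous g) (hg_lt : ∀ u i, |g u i| < 1) {φ : ℝ → ℝ} (hφ : ∀ x, |φ x| ≤ |x|)
    {Φ : (ι → ℝ) → ι → ℝ} (hΦ : ∀ u i, Φ u i = g u i * φ (u i)) (u₀ : ι → ℝ) :
    Tendsto (fun t => Φ^[t] u₀) atTop (𝓝 0) := by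
  cases nonempty_fintype ι
  obtain rfl : Φ = fun u => g u * (φ ∘ u) := funext₂ hΦ
  refine tendsto_iterate_mul_zero hg (fun u => ?_) (fun u => ?_) u₀
  · exact (pi_norm_lt_iff one_pos).mpr (hg_lt u)
  · exact (pi_norm_le_iff_of_nonneg (norm_nonneg u)).mpr fun i =>
      (hφ (u i)).trans (norm_le_pi_norm u i)

/-- Lemma 2 of the paper: the zero state is a global attractor of the dynamical
system induced by the CFN. For `Φ(u)(i) = σ((U·u + b)(i)) * tanh(u(i))` with
`σ` the logistic sigmoid, every forward orbit `u_t = Φ^[t](u₀)` converges to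
the zero vector. -/
theorem cfn_zero_global_attractor (n : ℕ) (hn : 0 < n)
    (U : Matrix (Fin n) (Fin n) ℝ) (b : Fin n → ℝ)
    (Φ : (Fin n → ℝ) → (Fin n → ℝ))
    (hΦ : ∀ u i, Φ u i = (1 / (1 + Real.exp (-(U.mulVec u + b) i))) * Real.tanh (u i))
    (u₀ : Fin n → ℝ) :
    Filter.Tendsto (fun t => Φ^[t] u₀) Filter.atTop (nhds 0) := by
  refine cfn_zero_global_attractor_general (g := fun u i => Real.sigmoid ((U.mulVec u + b) i))
    (by fun_prop) (fun _ _ => abs_sigmoid_lt_one _) abs_tanh_le_abs (fun u i => ?_) u₀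
  rw [hΦ, Real.sigmoid_def, one_div]
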